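/- For the elephant random walk with memory parameter p ∈ [0, 1) on a Cayley graph that is the d-regular tree T_d (d ≥ 3), for any m ∈ [1, 2) there exists a constant C > 0 such that E|Ξ_n|^m ≤ C · r_n^{−m} for all n ≥ 1, where r_n = n^{1/2} if p < p_d, r_n = (n / log n)^{1/2} if p = p_d, and r_n = n^{d(1−p)/(d−1)} if p > p_d, with p_d = (d + 1)/(2d). -/

import Mathlib

open MeasureTheory ProbabilityTheory Filter

noncomputable section

/-- The Cayley graph of a group with respect to a finite set of generators. -/
def cayleyGraph {G : Type*} [Group G] (S : Finset G) : SimpleGraph G where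
  Adj x y := x ≠ y ∧ (y * x⁻¹ ∈ S ∨ x * y⁻¹ ∈ S)
  symm := by
    constructor
    rintro x y ⟨h1, h2⟩
    refine ⟨h1.symm, ?_⟩
    rcases h2 with h | h
    · exact Or.inr h
    · exact Or.inl h
  loopless := ⟨fun x h => h.1 rfl⟩

/-- The elephant random walk (ERW) with memory parameter `p` on the Cayley graph of a
group `G` with respect to a symmetric generating set `S` of cardinality `d`, not
containing the identity, whose Cayley graph is a tree (hence the `d`-regular tree
`T_d`).  The steps are `g 1, g 2, …` (the value of `g 0` is irrelevant).  The law of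
the process is characterised by: `g 1` is uniform on `S`, and, conditionally on the
first `n` steps being `s 1, …, s n`, the next step `g (n+1)` equals `a ∈ S` with
probability `p * N/n + ((1-p)/(d-1)) * (n-N)/n`, where `N = #{1 ≤ k ≤ n : s k = a}`;
this is precisely the probability that the walker, recalling a uniform past epoch
`D ∈ {1, …, n}`, repeats `g D` with probability `p` and takes any given other step
with probability `(1-p)/(d-1)`. -/
structure ERW (G : Type*) [Group G] [DecidableEq G] (d : ℕ) (p : ℝ)
    (Ω : Type*) [MeasurableSpace Ω] (P : Measure Ω) where
  S : Finset G
  card_S : S.card = d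
  symm_S : ∀ s ∈ S, s⁻¹ ∈ S
  one_not_mem : (1 : G) ∉ S
  tree : (cayleyGraph S).IsTree
  g : ℕ → Ω → G
  meas_g : ∀ n a, MeasurableSet {ω | g n ω = a}
  mem_S : ∀ n, 1 ≤ n → ∀ ω, g n ω ∈ S
  init : ∀ a ∈ S, (P {ω | g 1 ω = a}).toReal = 1 / d
  update : ∀ n, 1 ≤ n → ∀ s : ℕ → G, ∀ a ∈ S,
    (P ({ω | ∀ k ∈ Finset.Icc 1 n, g k ω = s k} ∩ {ω | g (n + 1) ω = a})).toReal
      = (p * ((((Finset.Icc 1 n).filter fun k => s k = a).card : ℝ) / n)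
          + (1 - p) / ((d : ℝ) - 1)
            * (((n : ℝ) - (((Finset.Icc 1 n).filter fun k => s k = a).card : ℝ)) / n))
        * (P {ω | ∀ k ∈ Finset.Icc 1 n, g k ω = s k}).toReal

namespace ERW

variable {G : Type*} [Group G] [DecidableEq G] {d : ℕ} {p : ℝ}
  {Ω : Type*} [MeasurableSpace Ω] {P : Measure Ω}

/-- The position `w n = g n ⋯ g 1` of the walk at time `n`. -/
def pos (E : ERW G d p Ω P) : ℕ → Ω → G
  | 0 => fun _ => 1
  | n + 1 => fun ω => E.g (n + 1) ω * E.pos n ω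

/-- `Δ n`: the (word-metric) distance of the walker from the root at time `n`. -/
def dist (E : ERW G d p Ω P) (n : ℕ) (ω : Ω) : ℕ :=
  (cayleyGraph E.S).dist 1 (E.pos n ω)

/-- `N n a`: the number of `a`-steps taken by time `n`. -/
def count (E : ERW G d p Ω P) (a : G) (n : ℕ) (ω : Ω) : ℕ :=
  ((Finset.Icc 1 n).filter fun k => E.g k ω = a).card

/-- `γ n`: the unique step decreasing the distance to the root by 1
(a junk value if the walker is at the root). -/
def gammaStep (E : ERW G d p Ω P) (n : ℕ) (ω : Ω) : G :=
  @Classical.epsilon G ⟨1⟩ fun s =>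
    s ∈ E.S ∧ (cayleyGraph E.S).dist 1 (s * E.pos n ω) + 1 = E.dist n ω

/-- `ℓ n = N n (γ n)` if the walker is away from the root, and `0` otherwise. -/
def ell (E : ERW G d p Ω P) (n : ℕ) (ω : Ω) : ℕ :=
  if E.pos n ω = 1 then 0 else E.count (E.gammaStep n ω) n ω

/-- `Ξ n = (1/n) ∑_{k=0}^{n-1} (ℓ k / k - 1(Δ k > 0)/d)` (with the convention
`ℓ 0 / 0 = 0`, automatic since division by zero yields zero). -/
def Xi (E : ERW G d p Ω P) (n : ℕ) (ω : Ω) : ℝ :=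
  (1 / n) * ∑ k ∈ Finset.range n,
    ((E.ell k ω : ℝ) / k - (if 0 < E.dist k ω then 1 else 0) / d)

/-- The natural filtration `F n` generated by the steps up to time `n`. -/
def filt (E : ERW G d p Ω P) (n : ℕ) : MeasurableSpace Ω :=
  ⨆ k ∈ Finset.Icc 1 n, MeasurableSpace.comap (E.g k) ⊤

/-- `G n = E[Δ (n+1) - Δ n | F n]`. -/
def drift (E : ERW G d p Ω P) (n : ℕ) : Ω → ℝ :=
  P[fun ω => ((E.dist (n + 1) ω : ℝ) - (E.dist n ω : ℝ)) | E.filt n]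

/-- The martingale differences `Y k = Δ k - Δ (k-1) - G (k-1)`. -/
def mdiff (E : ERW G d p Ω P) (k : ℕ) (ω : Ω) : ℝ :=
  (E.dist k ω : ℝ) - (E.dist (k - 1) ω : ℝ) - E.drift (k - 1) ω

/-- The martingale `M n = ∑_{k=1}^n Y k`. -/
def mart (E : ERW G d p Ω P) (n : ℕ) (ω : Ω) : ℝ :=
  ∑ k ∈ Finset.Icc 1 n, E.mdiff k ω

end ERW

/-- The rate `r n`: `√n` in the subcritical regime `p < p_d = (d+1)/(2d)`,
`√(n / log n)` in the critical regime `p = p_d`, and `n ^ (d(1-p)/(d-1))` in the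
supercritical regime `p > p_d`. -/
def rate (p : ℝ) (d : ℕ) (n : ℕ) : ℝ :=
  if p < ((d : ℝ) + 1) / (2 * d) then Real.sqrt n
  else if p = ((d : ℝ) + 1) / (2 * d) then Real.sqrt ((n : ℝ) / Real.log n)
  else (n : ℝ) ^ ((d : ℝ) * (1 - p) / ((d : ℝ) - 1))

/-!
Write `c_a = N_n(a) - n/d` and `Q_n = ∑_a c_a²`. Since `∑_a c_a = 0`, a step `g` changes `Q_n` by
exactly `2 c_g + 1 - 1/d`; and since the next step is `a` with conditional probability
`1/d + (α/n) c_a`, where `α = (dp - 1)/(d - 1)`, taking expectations gives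
`E Q_{n+1} = (1 + 2α/n) E Q_n + 1 - 1/d`. So `E Q_n` is of order `n`, `n log n` or `n^{2α}`
according to whether `2α` is smaller than, equal to or larger than `1`, that is, `n² / r_n²` up to
constants. The `k`-th summand of `Ξ_n` is at most `√Q_k / k` in absolute value whatever `γ_k` is,
so Minkowski's inequality in `L²` gives `r_n² E Ξ_n² = O(1)`, which bounds the lower moments as
well.
-/

section Recursion

variable {v : ℕ → ℝ} {β : ℝ}

lemma le_of_step_le (hβ : 0 ≤ β) (hv₁ : v 1 ≤ 1)
    (hv : ∀ n, 1 ≤ n → v (n + 1) ≤ (1 + β / n) * v n + 1) {f : ℕ → ℝ} (hf₁ : 1 ≤ f 1)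
    (hf : ∀ n, 1 ≤ n → (1 + β / n) * f n + 1 ≤ f (n + 1)) {n : ℕ} (hn : 1 ≤ n) :
    v n ≤ f n := by
  induction n, hn using Nat.le_induction with
  | base => exact hv₁.trans hf₁
  | succ n hn ih =>
    calc v (n + 1) ≤ (1 + β / n) * v n + 1 := hv n hn
      _ ≤ (1 + β / n) * f n + 1 := by gcongr
      _ ≤ f (n + 1) := hf n hn

lemma le_mul_of_step_le_of_lt_one (hβ₀ : 0 ≤ β) (hβ : β < 1) (hv₁ : v 1 ≤ 1)
    (hv : ∀ n, 1 ≤ n → v (n + 1) ≤ (1 + β / n) * v n + 1) {n : ℕ} (hn : 1 ≤ n) :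
    v n ≤ (1 - β)⁻¹ * n := by
  have hβ' : 0 < 1 - β := sub_pos.2 hβ
  refine le_of_step_le (f := fun n ↦ (1 - β)⁻¹ * n) hβ₀ hv₁ hv ?_ (fun j hj ↦ le_of_eq ?_) hn
  · simpa using (one_le_inv₀ hβ').2 (by linarith)
  · have hj' : (j : ℝ) ≠ 0 := by positivity
    push_cast
    field_simp
    ring

lemma le_mul_log_of_step_le (hv₁ : v 1 ≤ 1)
    (hv : ∀ n, 1 ≤ n → v (n + 1) ≤ (1 + 1 / n) * v n + 1) {n : ℕ} (hn : 1 ≤ n) :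
    v n ≤ (1 + Real.log n) * n := by
  refine le_of_step_le (f := fun n ↦ (1 + Real.log n) * n) zero_le_one hv₁ hv (by simp)
    (fun j hj ↦ ?_) hn
  have hj' : (0 : ℝ) < j := by exact_mod_cast hj
  have hlog : 1 ≤ (Real.log (j + 1) - Real.log j) * (j + 1) := by
    have h := Real.one_sub_inv_le_log_of_pos (show (0 : ℝ) < (j + 1) / j by positivity)
    rw [Real.log_div (by positivity) hj'.ne'] at h
    calc (1 : ℝ) = (1 - ((j + 1) / j : ℝ)⁻¹) * (j + 1) := by field_simp; ring
      _ ≤ _ := by gcongr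
  have hstep : (1 + 1 / (j : ℝ)) * ((1 + Real.log j) * j) = (1 + Real.log j) * (j + 1) := by
    field_simp
  push_cast
  linarith

lemma le_mul_rpow_of_step_le_of_one_lt (hβ : 1 < β) (hv₁ : v 1 ≤ 1)
    (hv : ∀ n, 1 ≤ n → v (n + 1) ≤ (1 + β / n) * v n + 1) {n : ℕ} (hn : 1 ≤ n) :
    v n ≤ (1 + (β - 1)⁻¹) * (n : ℝ) ^ β := by
  have hβ' : 0 < β - 1 := sub_pos.2 hβ
  set B := (β - 1)⁻¹ with hB
  have hBβ : B * β = B + 1 := by rw [hB]; field_simp; ring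
  -- `-B n` solves the recursion with equality; `n ^ β` is a supersolution of its homogeneous part.
  suffices v n ≤ (1 + B) * (n : ℝ) ^ β - B * n from
    this.trans (sub_le_self _ (by positivity))
  refine le_of_step_le (f := fun n ↦ (1 + B) * (n : ℝ) ^ β - B * n) (by linarith) hv₁ hv (by simp)
    (fun j hj ↦ ?_) hn
  have hj' : (0 : ℝ) < j := by exact_mod_cast hj
  have hbernoulli : (1 + β / j) * (j : ℝ) ^ β ≤ ((j : ℝ) + 1) ^ β := by
    calc (1 + β / j) * (j : ℝ) ^ β = (1 + β * (1 / j)) * (j : ℝ) ^ β := by ring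
      _ ≤ (1 + 1 / (j : ℝ)) ^ β * (j : ℝ) ^ β := by
        gcongr
        exact one_add_mul_self_le_rpow_one_add (by linarith [one_div_pos.2 hj']) hβ.le
      _ = ((j : ℝ) + 1) ^ β := by
        rw [← Real.mul_rpow (by positivity) hj'.le]
        congr 1
        field_simp
  have hlinear : (1 + β / j) * (B * j) = B * j + (B + 1) := by
    rw [← hBβ]; field_simp
  push_cast
  calc (1 + β / j) * ((1 + B) * (j : ℝ) ^ β - B * j) + 1
      = (1 + B) * ((1 + β / j) * (j : ℝ) ^ β) - (1 + β / j) * (B * j) + 1 := by ring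
    _ ≤ (1 + B) * ((j : ℝ) + 1) ^ β - (B * j + (B + 1)) + 1 := by rw [hlinear]; gcongr
    _ = (1 + B) * ((j : ℝ) + 1) ^ β - B * (j + 1) := by ring

end Recursion

lemma one_add_log_div_log_le {n k : ℕ} (hk : 1 ≤ k) (hkn : k ≤ n) :
    (1 + Real.log k) / Real.log n ≤ 1 + (Real.log 2)⁻¹ := by
  rcases (hk.trans hkn).eq_or_lt with rfl | hn
  · simp only [Nat.cast_one, Real.log_one, div_zero]
    positivity
  have hlog_two : 0 < Real.log 2 := Real.log_pos one_lt_two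
  have hlog_two_le : Real.log 2 ≤ Real.log n := Real.log_le_log two_pos (by exact_mod_cast hn)
  have hlog_pos : 0 < Real.log n := hlog_two.trans_le hlog_two_le
  have hlog_le : Real.log k ≤ Real.log n :=
    Real.log_le_log (by exact_mod_cast hk) (by exact_mod_cast hkn)
  calc (1 + Real.log k) / Real.log n ≤ (1 + Real.log n) / Real.log n := by gcongr
    _ = 1 + (Real.log n)⁻¹ := by field_simp; ring
    _ ≤ 1 + (Real.log 2)⁻¹ := by gcongr

lemma sq_rpow_mul_rpow_le {α : ℝ} (hα : 1 ≤ 2 * α) {n k : ℕ} (hk : 1 ≤ k) (hkn : k ≤ n) :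
    ((n : ℝ) ^ (1 - α)) ^ 2 * (k : ℝ) ^ (2 * α) ≤ n * k := by
  have hk' : (0 : ℝ) < k := by exact_mod_cast hk
  have hn' : (0 : ℝ) < n := by exact_mod_cast hk.trans hkn
  calc ((n : ℝ) ^ (1 - α)) ^ 2 * (k : ℝ) ^ (2 * α)
      = ((n : ℝ) ^ (1 - α)) ^ 2 * ((k : ℝ) ^ (2 * α - 1) * k) := by
        rw [Real.rpow_sub_one hk'.ne', div_mul_cancel₀ _ hk'.ne']
    _ ≤ ((n : ℝ) ^ (1 - α)) ^ 2 * ((n : ℝ) ^ (2 * α - 1) * k) := by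
        gcongr
    _ = (n : ℝ) ^ ((1 - α) * 2 + (2 * α - 1)) * k := by
        rw [← mul_assoc, Real.rpow_add hn', Real.rpow_mul hn'.le, Real.rpow_two]
    _ = n * k := by rw [show (1 - α) * 2 + (2 * α - 1) = 1 by ring, Real.rpow_one]

section Rate

/-- The parameter `α = (dp - 1) / (d - 1)`: the conditional law of the next step given `n ≥ 1` past
steps puts mass `1 / d + (α / n) (N_n(a) - n / d)` on `a`. -/
def memoryExponent (d : ℕ) (p : ℝ) : ℝ := ((d : ℝ) * p - 1) / ((d : ℝ) - 1)

variable {d : ℕ} {p : ℝ}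

lemma rate_eq_memoryExponent (hd : 2 ≤ d) (n : ℕ) :
    rate p d n = if 2 * memoryExponent d p < 1 then √n
      else if 2 * memoryExponent d p = 1 then √(n / Real.log n)
      else (n : ℝ) ^ (1 - memoryExponent d p) := by
  have hd' : (2 : ℝ) ≤ d := by exact_mod_cast hd
  have hd₁ : (0 : ℝ) < d - 1 := by linarith
  have hlt : p < (d + 1) / (2 * d) ↔ 2 * memoryExponent d p < 1 := by
    rw [memoryExponent, lt_div_iff₀ (by positivity), mul_div_assoc', div_lt_one hd₁]
    constructor <;> intro h <;> linarith
  have heq : p = (d + 1) / (2 * d) ↔ 2 * memoryExponent d p = 1 := by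
    rw [memoryExponent, eq_div_iff (by positivity), mul_div_assoc', div_eq_one_iff_eq hd₁.ne']
    constructor <;> intro h <;> linarith
  have hexp : (d : ℝ) * (1 - p) / (d - 1) = 1 - memoryExponent d p := by
    rw [memoryExponent]
    field_simp
    ring
  simp only [rate, hlt, heq, hexp]

lemma rate_nonneg (p : ℝ) (d n : ℕ) : 0 ≤ rate p d n := by
  unfold rate
  split_ifs <;> positivity

lemma exists_sq_rate_mul_le (hd : 2 ≤ d) {v : ℕ → ℝ} (hv₀ : ∀ n, 0 ≤ v n) (hv₁ : v 1 ≤ 1)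
    (hv : ∀ n, 1 ≤ n → v (n + 1) ≤ (1 + 2 * memoryExponent d p / n) * v n + 1) :
    ∃ K, 0 < K ∧ ∀ n k : ℕ, 1 ≤ k → k ≤ n → rate p d n ^ 2 * v k ≤ K * n * k := by
  simp only [rate_eq_memoryExponent hd]
  set α := memoryExponent d p
  rcases lt_trichotomy (2 * α) 1 with hα | hα | hα
  · have hmax : max (2 * α) 0 < 1 := max_lt hα one_pos
    have hv_max : ∀ n, 1 ≤ n → v (n + 1) ≤ (1 + max (2 * α) 0 / n) * v n + 1 := fun n hn ↦
      (hv n hn).trans <| by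
        gcongr
        exacts [hv₀ n, le_max_left _ _]
    refine ⟨(1 - max (2 * α) 0)⁻¹, inv_pos.2 (sub_pos.2 hmax), fun n k hk _ ↦ ?_⟩
    rw [if_pos hα, Real.sq_sqrt n.cast_nonneg, mul_comm _ (n : ℝ), mul_assoc]
    gcongr
    exact le_mul_of_step_le_of_lt_one (le_max_right _ _) hmax hv₁ hv_max hk
  · have hlog_two : 0 < Real.log 2 := Real.log_pos one_lt_two
    refine ⟨1 + (Real.log 2)⁻¹, by positivity, fun n k hk hkn ↦ ?_⟩
    rw [if_neg hα.not_lt, if_pos hα, Real.sq_sqrt (by positivity)]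
    rw [hα] at hv
    calc n / Real.log n * v k ≤ n / Real.log n * ((1 + Real.log k) * k) := by
          gcongr
          exact le_mul_log_of_step_le hv₁ hv hk
      _ = (1 + Real.log k) / Real.log n * n * k := by ring
      _ ≤ (1 + (Real.log 2)⁻¹) * n * k := by
          gcongr
          exact one_add_log_div_log_le hk hkn
  · have : 0 < 2 * α - 1 := sub_pos.2 hα
    refine ⟨1 + (2 * α - 1)⁻¹, by positivity, fun n k hk hkn ↦ ?_⟩
    rw [if_neg hα.not_gt, if_neg hα.ne']
    calc ((n : ℝ) ^ (1 - α)) ^ 2 * v k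
        ≤ ((n : ℝ) ^ (1 - α)) ^ 2 * ((1 + (2 * α - 1)⁻¹) * (k : ℝ) ^ (2 * α)) := by
          gcongr
          exact le_mul_rpow_of_step_le_of_one_lt hα hv₁ hv hk
      _ = (1 + (2 * α - 1)⁻¹) * (((n : ℝ) ^ (1 - α)) ^ 2 * (k : ℝ) ^ (2 * α)) := by ring
      _ ≤ (1 + (2 * α - 1)⁻¹) * (n * k) :=
          mul_le_mul_of_nonneg_left (sq_rpow_mul_rpow_le hα.le hk hkn) (by positivity)
      _ = (1 + (2 * α - 1)⁻¹) * n * k := (mul_assoc ..).symm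

end Rate

section Integral

variable {Ω : Type*} [MeasurableSpace Ω] {μ : Measure Ω}

lemma sum_range_inv_sqrt_le (n : ℕ) : ∑ k ∈ Finset.range (n + 1), (√k)⁻¹ ≤ 2 * √n := by
  induction n with
  | zero => simp
  | succ n ih =>
    have hpos : 0 < √((n : ℝ) + 1) := by positivity
    have hsq : √((n : ℝ) + 1) ^ 2 = √n ^ 2 + 1 := by
      rw [Real.sq_sqrt (by positivity), Real.sq_sqrt (by positivity)]
    have hstep : (√((n : ℝ) + 1))⁻¹ ≤ 2 * √((n : ℝ) + 1) - 2 * √n := by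
      rw [inv_le_iff_one_le_mul₀ hpos]
      nlinarith [sq_nonneg (√((n : ℝ) + 1) - √n)]
    rw [Finset.sum_range_succ]
    push_cast
    linarith

lemma sq_lpNorm_two {f : Ω → ℝ} (hf : MemLp f 2 μ) : lpNorm f 2 μ ^ 2 = ∫ ω, f ω ^ 2 ∂μ := by
  have hint : 0 ≤ ∫ ω, f ω ^ 2 ∂μ := integral_nonneg fun ω ↦ sq_nonneg (f ω)
  rw [lpNorm_eq_integral_norm_rpow_toReal two_ne_zero ENNReal.ofNat_ne_top hf.aestronglyMeasurable]
  simp only [ENNReal.toReal_ofNat, Real.rpow_two, Real.norm_eq_abs, sq_abs]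
  rw [← Real.rpow_two, ← Real.rpow_mul hint, inv_mul_cancel₀ two_ne_zero, Real.rpow_one]

lemma integral_sq_sum_range_le {X : ℕ → Ω → ℝ} {n : ℕ} {h : ℝ} (hh : 0 ≤ h)
    (hX : ∀ k ∈ Finset.range n, MemLp (X k) 2 μ)
    (hXh : ∀ k ∈ Finset.range n, ∫ ω, X k ω ^ 2 ∂μ ≤ h / k) :
    ∫ ω, (∑ k ∈ Finset.range n, X k ω) ^ 2 ∂μ ≤ 4 * h * n := by
  have hterm : ∀ k ∈ Finset.range n, lpNorm (X k) 2 μ ≤ √h * (√k)⁻¹ := fun k hk ↦ by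
    rw [← div_eq_mul_inv, ← Real.sqrt_div hh]
    exact Real.le_sqrt_of_sq_le ((sq_lpNorm_two (hX k hk)).trans_le (hXh k hk))
  have hsum : ∑ k ∈ Finset.range n, (√k)⁻¹ ≤ 2 * √n :=
    (Finset.sum_le_sum_of_subset_of_nonneg (Finset.range_mono n.le_succ)
      fun _ _ _ ↦ by positivity).trans (sum_range_inv_sqrt_le n)
  have hminkowski : lpNorm (∑ k ∈ Finset.range n, X k) 2 μ ≤ √h * (2 * √n) :=
    calc lpNorm (∑ k ∈ Finset.range n, X k) 2 μ
        ≤ ∑ k ∈ Finset.range n, lpNorm (X k) 2 μ := lpNorm_sum_le hX one_le_two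
      _ ≤ ∑ k ∈ Finset.range n, √h * (√k)⁻¹ := Finset.sum_le_sum hterm
      _ ≤ √h * (2 * √n) := by rw [← Finset.mul_sum]; gcongr
  calc ∫ ω, (∑ k ∈ Finset.range n, X k ω) ^ 2 ∂μ
      = lpNorm (∑ k ∈ Finset.range n, X k) 2 μ ^ 2 := by
        rw [sq_lpNorm_two (memLp_finsetSum' _ hX)]
        simp only [Finset.sum_apply]
    _ ≤ (√h * (2 * √n)) ^ 2 := pow_le_pow_left₀ lpNorm_nonneg hminkowski 2
    _ = 4 * h * n := by
        rw [mul_pow, mul_pow, Real.sq_sqrt hh, Real.sq_sqrt n.cast_nonneg]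
        ring

lemma rpow_le_one_add_sq {x m : ℝ} (hx : 0 ≤ x) (hm₀ : 0 ≤ m) (hm₂ : m ≤ 2) :
    x ^ m ≤ 1 + x ^ 2 := by
  rcases le_total x 1 with hx₁ | hx₁
  · exact (Real.rpow_le_one hx hx₁ hm₀).trans (le_add_of_nonneg_right (sq_nonneg x))
  · have := Real.rpow_le_rpow_of_exponent_le hx₁ hm₂
    rw [Real.rpow_two] at this
    linarith

lemma rpow_mul_integral_abs_rpow_le [IsProbabilityMeasure μ] {X Z : Ω → ℝ} {r m C : ℝ}
    (hr : 0 ≤ r) (hm₀ : 0 ≤ m) (hm₂ : m ≤ 2) (hZ : MemLp Z 2 μ) (hXZ : ∀ ω, |r * X ω| ≤ Z ω)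
    (hZC : ∫ ω, Z ω ^ 2 ∂μ ≤ C) :
    r ^ m * ∫ ω, |X ω| ^ m ∂μ ≤ 1 + C := by
  have hpointwise (ω : Ω) : r ^ m * |X ω| ^ m ≤ 1 + Z ω ^ 2 :=
    calc r ^ m * |X ω| ^ m = |r * X ω| ^ m := by
          rw [abs_mul, abs_of_nonneg hr, Real.mul_rpow hr (abs_nonneg _)]
      _ ≤ 1 + |r * X ω| ^ 2 := rpow_le_one_add_sq (abs_nonneg _) hm₀ hm₂
      _ ≤ 1 + Z ω ^ 2 := by gcongr; exact hXZ ω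
  calc r ^ m * ∫ ω, |X ω| ^ m ∂μ = ∫ ω, r ^ m * |X ω| ^ m ∂μ := (integral_const_mul _ _).symm
    _ ≤ ∫ ω, (1 + Z ω ^ 2) ∂μ :=
        integral_mono_of_nonneg (.of_forall fun ω ↦ by positivity)
          ((integrable_const _).add hZ.integrable_sq) (.of_forall hpointwise)
    _ = 1 + ∫ ω, Z ω ^ 2 ∂μ := by
        rw [integral_add (integrable_const _) hZ.integrable_sq]
        simp
    _ ≤ 1 + C := by gcongr

variable {ι : Type*} [Finite ι] {f : Ω → ι} {X Y : Ω → ℝ}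

lemma memLp_of_factorsThrough_finite [IsFiniteMeasure μ] {q : ENNReal}
    (hf : ∀ i, MeasurableSet (f ⁻¹' {i})) (hX : X.FactorsThrough f) : MemLp X q μ := by
  let _ : MeasurableSpace ι := ⊤
  have hf_meas : Measurable f := measurable_to_countable' hf
  have hX_eq : X = Function.extend f X 0 ∘ f := (hX.extend_comp (0 : ι → ℝ)).symm
  obtain ⟨C, hC⟩ := (Set.finite_range (|Function.extend f X 0 ·|)).bddAbove
  refine .of_bound (hX_eq ▸ (measurable_of_finite _).comp hf_meas).aestronglyMeasurable C
    (.of_forall fun ω ↦ ?_)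
  rw [hX_eq]
  exact hC ⟨f ω, rfl⟩

lemma integral_eq_of_forall_setIntegral_fiber_eq (hf : ∀ i, MeasurableSet (f ⁻¹' {i}))
    (hX : Integrable X μ) (hY : Integrable Y μ)
    (h : ∀ ω₀, ∫ ω in f ⁻¹' {f ω₀}, X ω ∂μ = ∫ ω in f ⁻¹' {f ω₀}, Y ω ∂μ) :
    ∫ ω, X ω ∂μ = ∫ ω, Y ω ∂μ := by
  have := Fintype.ofFinite ι
  have hdisj : Pairwise (Function.onFun Disjoint fun i ↦ f ⁻¹' {i}) := fun i j hij ↦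
    (Set.disjoint_singleton.2 hij).preimage f
  have hsplit {W : Ω → ℝ} (hW : Integrable W μ) :
      ∫ ω, W ω ∂μ = ∑ i, ∫ ω in f ⁻¹' {i}, W ω ∂μ := by
    rw [← integral_iUnion_fintype hf hdisj fun i ↦ hW.integrableOn, ← Set.preimage_iUnion,
      Set.iUnion_of_singleton, Set.preimage_univ, setIntegral_univ]
  rw [hsplit hX, hsplit hY]
  refine Finset.sum_congr rfl fun i _ ↦ ?_
  by_cases hi : ∃ ω₀, f ω₀ = i
  · obtain ⟨ω₀, rfl⟩ := hi
    exact h ω₀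
  · rw [Set.preimage_singleton_eq_empty.2 hi]
    simp

end Integral

lemma exists_adj_dist_add_one_eq {V : Type*} {H : SimpleGraph V} (hH : H.Connected) {u v : V}
    (huv : u ≠ v) :
    ∃ w, H.Adj v w ∧ H.dist u w + 1 = H.dist u v := by
  obtain ⟨q, hq⟩ := hH.exists_walk_length_eq_dist v u
  cases q with
  | nil => exact absurd rfl huv
  | @cons _ w _ hvw q =>
    refine ⟨w, hvw, ?_⟩
    have hle : H.dist w u ≤ q.length := SimpleGraph.dist_le q
    have htriangle : H.dist v u ≤ H.dist v w + H.dist w u := hH.dist_triangle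
    rw [SimpleGraph.dist_eq_one_iff_adj.2 hvw] at htriangle
    rw [SimpleGraph.Walk.length_cons] at hq
    rw [H.dist_comm (u := u) (v := w), H.dist_comm (u := u) (v := v)]
    omega

namespace ERW

variable {G : Type*} [Group G] [DecidableEq G] {d : ℕ} {p : ℝ}
  {Ω : Type*} [MeasurableSpace Ω] {P : Measure Ω} (E : ERW G d p Ω P)

/-- The deviation `N_n(a) - n / d` of the number of `a`-steps from its value for an equidistributed
sequence of steps. -/
def centeredCount (a : G) (n : ℕ) (ω : Ω) : ℝ := E.count a n ω - n / d

/-- `Q_n = ∑_a (N_n(a) - n / d)²`, the squared Euclidean norm of the vector of centered counts. -/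
def sqDeviation (n : ℕ) (ω : Ω) : ℝ := ∑ a ∈ E.S, E.centeredCount a n ω ^ 2

/-- The first `n` steps, as an element of a finite type. -/
def history (n : ℕ) (ω : Ω) : Finset.Icc 1 n → E.S :=
  fun k ↦ ⟨E.g k ω, E.mem_S k (Finset.mem_Icc.1 k.2).1 ω⟩

lemma sqDeviation_nonneg (n : ℕ) (ω : Ω) : 0 ≤ E.sqDeviation n ω :=
  Finset.sum_nonneg fun _ _ ↦ sq_nonneg _

lemma centeredCount_succ (a : G) (n : ℕ) (ω : Ω) :
    E.centeredCount a (n + 1) ω =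
      E.centeredCount a n ω + ((if E.g (n + 1) ω = a then 1 else 0) - 1 / d) := by
  rw [centeredCount, centeredCount, count, count,
    ← Finset.insert_Icc_right_eq_Icc_add_one (by omega : 1 ≤ n + 1), Finset.filter_insert]
  split_ifs
  · rw [Finset.card_insert_of_notMem (by simp)]
    push_cast
    ring
  · push_cast
    ring

lemma sum_centeredCount (hd : d ≠ 0) (n : ℕ) (ω : Ω) :
    ∑ a ∈ E.S, E.centeredCount a n ω = 0 := by
  have hcount : ∑ a ∈ E.S, E.count a n ω = n := by
    simpa [count] using (Finset.card_eq_sum_card_fiberwise (s := Finset.Icc 1 n) (t := E.S)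
      (f := fun k ↦ E.g k ω) fun k hk ↦ E.mem_S k (Finset.mem_Icc.1 hk).1 ω).symm
  simp only [centeredCount, Finset.sum_sub_distrib, Finset.sum_const, E.card_S, nsmul_eq_mul]
  rw [← Nat.cast_sum, hcount]
  field_simp
  ring

lemma sqDeviation_succ (hd : d ≠ 0) (n : ℕ) (ω : Ω) :
    E.sqDeviation (n + 1) ω =
      E.sqDeviation n ω + 2 * E.centeredCount (E.g (n + 1) ω) n ω + (1 - 1 / d) := by
  have hexpand (a : G) : E.centeredCount a (n + 1) ω ^ 2 = E.centeredCount a n ω ^ 2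
      + (if E.g (n + 1) ω = a then 2 * E.centeredCount a n ω + (1 - 2 / d) else 0)
      + ((1 / d) ^ 2 - 2 / d * E.centeredCount a n ω) := by
    rw [centeredCount_succ]
    split_ifs <;> ring
  simp only [sqDeviation, hexpand, Finset.sum_add_distrib, Finset.sum_sub_distrib,
    Finset.sum_ite_eq, E.mem_S (n + 1) (by omega) ω, if_true, ← Finset.mul_sum,
    E.sum_centeredCount hd, Finset.sum_const, E.card_S, nsmul_eq_mul]
  field_simp
  ring

lemma history_eq_history_iff {n : ℕ} {ω ω₀ : Ω} :
    E.history n ω = E.history n ω₀ ↔ ∀ k ∈ Finset.Icc 1 n, E.g k ω = E.g k ω₀ := by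
  simp [history, funext_iff]

lemma measurableSet_preimage_history (n : ℕ) (s : Finset.Icc 1 n → E.S) :
    MeasurableSet (E.history n ⁻¹' {s}) := by
  have : E.history n ⁻¹' {s} = ⋂ k : Finset.Icc 1 n, {ω | E.g k ω = s k} := by
    ext ω
    simp [history, funext_iff, Subtype.ext_iff]
  rw [this]
  exact .iInter fun k ↦ E.meas_g k (s k)

lemma centeredCount_factorsThrough_history (a : G) (n : ℕ) :
    (E.centeredCount a n).FactorsThrough (E.history n) := by
  intro ω ω₀ h
  have hcount : E.count a n ω = E.count a n ω₀ :=
    congrArg Finset.card <| Finset.filter_congr fun k hk ↦ by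
      rw [E.history_eq_history_iff.1 h k hk]
  rw [centeredCount, centeredCount, hcount]

lemma sqDeviation_factorsThrough_history (n : ℕ) :
    (E.sqDeviation n).FactorsThrough (E.history n) := fun _ _ h ↦
  Finset.sum_congr rfl fun a _ ↦ by rw [E.centeredCount_factorsThrough_history a n h]

lemma memLp_of_factorsThrough_history [IsFiniteMeasure P] {n : ℕ} {X : Ω → ℝ} {q : ENNReal}
    (hX : X.FactorsThrough (E.history n)) : MemLp X q P :=
  memLp_of_factorsThrough_finite (E.measurableSet_preimage_history n) hX

lemma measureReal_history_inter_step (hd : 2 ≤ d) {n : ℕ} (hn : 1 ≤ n) {a : G} (ha : a ∈ E.S)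
    (ω₀ : Ω) :
    P.real (E.history n ⁻¹' {E.history n ω₀} ∩ {ω | E.g (n + 1) ω = a}) =
      (1 / d + memoryExponent d p / n * E.centeredCount a n ω₀)
        * P.real (E.history n ⁻¹' {E.history n ω₀}) := by
  have hd' : (2 : ℝ) ≤ d := by exact_mod_cast hd
  have hd₁ : (d : ℝ) - 1 ≠ 0 := by linarith
  have hfiber : E.history n ⁻¹' {E.history n ω₀} =
      {ω | ∀ k ∈ Finset.Icc 1 n, E.g k ω = E.g k ω₀} := Set.ext fun _ ↦ E.history_eq_history_iff
  rw [hfiber]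
  refine (E.update n hn (E.g · ω₀) a ha).trans ?_
  change (p * (E.count a n ω₀ / n) + (1 - p) / (d - 1) * ((n - E.count a n ω₀) / n)) * _ = _
  congr 1
  rw [centeredCount, memoryExponent]
  field_simp
  ring

lemma setIntegral_step_eq [IsFiniteMeasure P] (hd : 2 ≤ d) {n : ℕ} (hn : 1 ≤ n) {a : G}
    (ha : a ∈ E.S) {X : Ω → ℝ} (hX : X.FactorsThrough (E.history n)) :
    ∫ ω in {ω | E.g (n + 1) ω = a}, X ω ∂P =
      ∫ ω, (1 / d + memoryExponent d p / n * E.centeredCount a n ω) * X ω ∂P := by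
  have hcount := E.centeredCount_factorsThrough_history a n
  have hprod : Function.FactorsThrough
      (fun ω ↦ (1 / d + memoryExponent d p / n * E.centeredCount a n ω) * X ω) (E.history n) :=
    fun _ _ h ↦ by simp only [hcount h, hX h]
  have hX_int : Integrable X P := (E.memLp_of_factorsThrough_history hX).integrable le_rfl
  rw [← integral_indicator (E.meas_g (n + 1) a)]
  refine integral_eq_of_forall_setIntegral_fiber_eq (E.measurableSet_preimage_history n)
    (hX_int.indicator (E.meas_g (n + 1) a))
    ((E.memLp_of_factorsThrough_history hprod).integrable le_rfl) fun ω₀ ↦ ?_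
  have hfiber := E.measurableSet_preimage_history n (E.history n ω₀)
  rw [setIntegral_indicator (E.meas_g (n + 1) a),
    setIntegral_congr_fun (hfiber.inter (E.meas_g (n + 1) a)) fun ω hω ↦ hX hω.1,
    setIntegral_congr_fun hfiber fun ω hω ↦ hprod hω, setIntegral_const, setIntegral_const,
    E.measureReal_history_inter_step hd hn ha, smul_eq_mul, smul_eq_mul]
  ring

lemma integrable_centeredCount [IsFiniteMeasure P] (a : G) (n : ℕ) :
    Integrable (E.centeredCount a n) P :=
  (E.memLp_of_factorsThrough_history (E.centeredCount_factorsThrough_history a n)).integrable le_rfl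

lemma integrable_sqDeviation [IsFiniteMeasure P] (n : ℕ) : Integrable (E.sqDeviation n) P :=
  (E.memLp_of_factorsThrough_history (E.sqDeviation_factorsThrough_history n)).integrable le_rfl

lemma centeredCount_step_eq_sum_indicator (n : ℕ) (ω : Ω) :
    E.centeredCount (E.g (n + 1) ω) n ω =
      ∑ a ∈ E.S, {ω | E.g (n + 1) ω = a}.indicator (E.centeredCount a n) ω := by
  simp [Set.indicator_apply, E.mem_S (n + 1) (by omega) ω]

lemma integrable_centeredCount_step [IsFiniteMeasure P] (n : ℕ) :
    Integrable (fun ω ↦ E.centeredCount (E.g (n + 1) ω) n ω) P := by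
  simp only [centeredCount_step_eq_sum_indicator]
  exact integrable_finsetSum _ fun a _ ↦
    (E.integrable_centeredCount a n).indicator (E.meas_g (n + 1) a)

lemma integral_centeredCount_step [IsFiniteMeasure P] (hd : 2 ≤ d) {n : ℕ} (hn : 1 ≤ n) :
    ∫ ω, E.centeredCount (E.g (n + 1) ω) n ω ∂P =
      memoryExponent d p / n * ∫ ω, E.sqDeviation n ω ∂P := by
  set α := memoryExponent d p
  have hpointwise (ω : Ω) : ∑ a ∈ E.S,
      (1 / d + α / n * E.centeredCount a n ω) * E.centeredCount a n ω =
        α / n * E.sqDeviation n ω := by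
    simp only [add_mul, mul_assoc, ← sq, Finset.sum_add_distrib, ← Finset.mul_sum,
      E.sum_centeredCount (by omega : d ≠ 0), mul_zero, zero_add, sqDeviation]
  have hint (a : G) : Integrable
      (fun ω ↦ (1 / d + α / n * E.centeredCount a n ω) * E.centeredCount a n ω) P :=
    (E.memLp_of_factorsThrough_history (n := n) fun _ _ h ↦ by
      simp only [E.centeredCount_factorsThrough_history a n h]).integrable le_rfl
  simp only [centeredCount_step_eq_sum_indicator]
  rw [integral_finsetSum _ fun a _ ↦
      (E.integrable_centeredCount a n).indicator (E.meas_g (n + 1) a), ← integral_const_mul]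
  simp only [← hpointwise]
  rw [integral_finsetSum _ fun a _ ↦ hint a]
  refine Finset.sum_congr rfl fun a ha ↦ ?_
  rw [integral_indicator (E.meas_g (n + 1) a),
    E.setIntegral_step_eq hd hn ha (E.centeredCount_factorsThrough_history a n)]

lemma integral_sqDeviation_succ [IsProbabilityMeasure P] (hd : 2 ≤ d) {n : ℕ} (hn : 1 ≤ n) :
    ∫ ω, E.sqDeviation (n + 1) ω ∂P =
      (1 + 2 * memoryExponent d p / n) * ∫ ω, E.sqDeviation n ω ∂P + (1 - 1 / d) := by
  have hstep := (E.integrable_centeredCount_step n).const_mul 2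
  have hsum : Integrable
      (fun ω ↦ E.sqDeviation n ω + 2 * E.centeredCount (E.g (n + 1) ω) n ω) P :=
    (E.integrable_sqDeviation n).add hstep
  simp only [E.sqDeviation_succ (by omega : d ≠ 0)]
  rw [integral_add hsum (integrable_const _),
    integral_add (E.integrable_sqDeviation n) hstep, integral_const_mul,
    E.integral_centeredCount_step hd hn, integral_const, probReal_univ, one_smul]
  ring

lemma sqDeviation_one (hd : d ≠ 0) (ω : Ω) : E.sqDeviation 1 ω = 1 - 1 / d := by
  rw [E.sqDeviation_succ hd 0 ω]
  simp [sqDeviation, centeredCount, count]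

lemma exists_sq_rate_mul_integral_sqDeviation_le [IsProbabilityMeasure P] (hd : 2 ≤ d) :
    ∃ K, 0 < K ∧ ∀ n k : ℕ, 1 ≤ k → k ≤ n →
      rate p d n ^ 2 * ∫ ω, E.sqDeviation k ω ∂P ≤ K * n * k := by
  have hd_inv : (0 : ℝ) ≤ 1 / d := by positivity
  refine exists_sq_rate_mul_le hd (fun n ↦ integral_nonneg (E.sqDeviation_nonneg n)) ?_
    fun n hn ↦ ?_
  · simp only [E.sqDeviation_one (by omega : d ≠ 0), integral_const, probReal_univ, one_smul]
    linarith
  · rw [E.integral_sqDeviation_succ hd hn]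
    linarith

lemma gammaStep_mem {n : ℕ} {ω : Ω} (h : E.pos n ω ≠ 1) : E.gammaStep n ω ∈ E.S := by
  obtain ⟨w, hadj, hdist⟩ := exists_adj_dist_add_one_eq E.tree.connected h.symm
  have hmem : w * (E.pos n ω)⁻¹ ∈ E.S :=
    hadj.2.elim id fun hmem ↦ by simpa using E.symm_S _ hmem
  refine (Classical.epsilon_spec_aux ⟨1⟩ (fun s ↦ s ∈ E.S ∧
    (cayleyGraph E.S).dist 1 (s * E.pos n ω) + 1 = E.dist n ω) ⟨_, hmem, ?_⟩).1
  rw [inv_mul_cancel_right, hdist, dist]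

lemma abs_centeredCount_le_sqrt_sqDeviation {a : G} (ha : a ∈ E.S) (n : ℕ) (ω : Ω) :
    |E.centeredCount a n ω| ≤ √(E.sqDeviation n ω) :=
  Real.abs_le_sqrt <|
    Finset.single_le_sum (f := fun a ↦ E.centeredCount a n ω ^ 2) (fun _ _ ↦ sq_nonneg _) ha

lemma abs_ell_div_sub_le (k : ℕ) (ω : Ω) :
    |(E.ell k ω : ℝ) / k - (if 0 < E.dist k ω then 1 else 0) / d| ≤ √(E.sqDeviation k ω) / k := by
  by_cases hroot : E.pos k ω = 1
  · have hdist : E.dist k ω = 0 := by simp [dist, hroot]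
    simp only [ell, hroot, hdist, if_true, lt_irrefl, if_false]
    simpa using by positivity
  · have hdist : 0 < E.dist k ω := E.tree.connected.pos_dist_of_ne (Ne.symm hroot)
    have hk : k ≠ 0 := by rintro rfl; exact hroot rfl
    have hterm : (E.ell k ω : ℝ) / k - (if 0 < E.dist k ω then 1 else 0) / d =
        E.centeredCount (E.gammaStep k ω) k ω / k := by
      rw [ell, if_neg hroot, if_pos hdist, centeredCount]
      field_simp
    rw [hterm, abs_div, Nat.abs_cast]
    gcongr
    exact E.abs_centeredCount_le_sqrt_sqDeviation (E.gammaStep_mem hroot) k ω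

lemma exists_integral_sq_rate_mul_sqrt_sqDeviation_le [IsProbabilityMeasure P] (hd : 2 ≤ d) :
    ∃ K, 0 < K ∧ ∀ n, ∀ k ∈ Finset.range n,
      ∫ ω, (rate p d n / n * (√(E.sqDeviation k ω) / k)) ^ 2 ∂P ≤ K / n / k := by
  obtain ⟨K, hK, hbound⟩ := E.exists_sq_rate_mul_integral_sqDeviation_le hd
  refine ⟨K, hK, fun n k hk ↦ ?_⟩
  have hkn : k < n := Finset.mem_range.1 hk
  rcases k.eq_zero_or_pos with rfl | hk₀
  · simp
  have hn₀ : 0 < n := hk₀.trans hkn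
  simp only [mul_pow, div_pow, Real.sq_sqrt (E.sqDeviation_nonneg k _), integral_const_mul,
    integral_div]
  calc rate p d n ^ 2 / n ^ 2 * ((∫ ω, E.sqDeviation k ω ∂P) / k ^ 2)
      = rate p d n ^ 2 * (∫ ω, E.sqDeviation k ω ∂P) / (n * k) ^ 2 := by ring
    _ ≤ K * n * k / (n * k) ^ 2 :=
        div_le_div_of_nonneg_right (hbound n k hk₀ hkn.le) (by positivity)
    _ = K / n / k := by field_simp

lemma abs_Xi_le (n : ℕ) (ω : Ω) :
    |E.Xi n ω| ≤ 1 / n * ∑ k ∈ Finset.range n, √(E.sqDeviation k ω) / k := by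
  rw [Xi, abs_mul, abs_of_nonneg (by positivity : (0 : ℝ) ≤ 1 / n)]
  gcongr
  exact (Finset.abs_sum_le_sum_abs _ _).trans
    (Finset.sum_le_sum fun k _ ↦ E.abs_ell_div_sub_le k ω)

end ERW

theorem erw_Xi_moments_general {G : Type*} [Group G] [DecidableEq G] {Ω : Type*}
    [MeasurableSpace Ω] {P : Measure Ω} [IsProbabilityMeasure P] {d : ℕ} (hd : 2 ≤ d) {p : ℝ}
    (E : ERW G d p Ω P) {m : ℝ} (hm₀ : 0 ≤ m) (hm₂ : m ≤ 2) :
    ∃ C : ℝ, 0 < C ∧ ∀ n : ℕ, 1 ≤ n →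
      rate p d n ^ m * ∫ ω, |E.Xi n ω| ^ m ∂P ≤ C := by
  obtain ⟨K, hK, hbound⟩ := E.exists_integral_sq_rate_mul_sqrt_sqDeviation_le hd
  refine ⟨1 + 4 * K, by positivity, fun n hn ↦ ?_⟩
  have hr := rate_nonneg p d n
  set Y : ℕ → Ω → ℝ := fun k ω ↦ rate p d n / n * (√(E.sqDeviation k ω) / k)
  have hY (k : ℕ) : MemLp (Y k) 2 P := E.memLp_of_factorsThrough_history (n := k) fun _ _ h ↦ by
    simp only [Y, E.sqDeviation_factorsThrough_history k h]
  have hXi (ω : Ω) : |rate p d n * E.Xi n ω| ≤ ∑ k ∈ Finset.range n, Y k ω := by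
    rw [abs_mul, abs_of_nonneg hr, ← Finset.mul_sum, div_eq_mul_one_div, mul_assoc]
    gcongr
    exact E.abs_Xi_le n ω
  refine rpow_mul_integral_abs_rpow_le hr hm₀ hm₂ (memLp_finsetSum _ fun k _ ↦ hY k) hXi ?_
  calc ∫ ω, (∑ k ∈ Finset.range n, Y k ω) ^ 2 ∂P ≤ 4 * (K / n) * n :=
        integral_sq_sum_range_le (by positivity) (fun k _ ↦ hY k) (hbound n)
    _ = 4 * K := by field_simp

/-- concentration of `Ξ n`: for any `m ∈ [1,2)` there is `C > 0`
with `E|Ξ n|^m ≤ C * r n ^ (-m)` for all `n ≥ 1` (stated in the equivalent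
product form `r n ^ m * E|Ξ n|^m ≤ C`). -/
theorem erw_Xi_moments
    {G : Type*} [Group G] [DecidableEq G] {Ω : Type*} [MeasurableSpace Ω]
    {P : Measure Ω} [IsProbabilityMeasure P]
    (d : ℕ) (hd : 3 ≤ d) (p : ℝ) (hp0 : 0 ≤ p) (hp1 : p < 1)
    (E : ERW G d p Ω P) (m : ℝ) (hm1 : 1 ≤ m) (hm2 : m < 2) :
    ∃ C : ℝ, 0 < C ∧ ∀ n : ℕ, 1 ≤ n →
      rate p d n ^ m * ∫ ω, |E.Xi n ω| ^ m ∂P ≤ C :=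
  erw_Xi_moments_general (by omega) E (zero_le_one.trans hm1) hm2.le

end
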